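/- Define the real polynomials f₅(q) = q^44+15q^42+14q^40-77q^38-63q^36+220q^34+65q^32-717q^30+14q^28+1807q^26+137q^24-2232q^22+137q^20+1807q^18+14q^16-717q^14+65q^12+220q^10-63q^8-77q^6+14q^4+15q^2+1 and f₆(q) = 4q^43+16q^41-16q^39-76q^37+48q^35+184q^33-244q^31-472q^29+760q^27+1036q^25-1168q^23-1168q^21+1036q^19+760q^17-472q^15-244q^13+184q^11+48q^9-76q^7-16q^5+16q^3+4q. Then for every real number q ≥ √2, both f₅(q) + √2·f₆(q) > 0 and f₅(q) - √2·f₆(q) > 0. -/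

import Mathlib

noncomputable def f₅ (q : ℝ) : ℝ :=
  q^44 + 15*q^42 + 14*q^40 - 77*q^38 - 63*q^36 + 220*q^34 + 65*q^32 - 717*q^30
    + 14*q^28 + 1807*q^26 + 137*q^24 - 2232*q^22 + 137*q^20 + 1807*q^18 + 14*q^16
    - 717*q^14 + 65*q^12 + 220*q^10 - 63*q^8 - 77*q^6 + 14*q^4 + 15*q^2 + 1

noncomputable def f₆ (q : ℝ) : ℝ :=
  4*q^43 + 16*q^41 - 16*q^39 - 76*q^37 + 48*q^35 + 184*q^33 - 244*q^31 - 472*q^29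
    + 760*q^27 + 1036*q^25 - 1168*q^23 - 1168*q^21 + 1036*q^19 + 760*q^17 - 472*q^15
    - 244*q^13 + 184*q^11 + 48*q^9 - 76*q^7 - 16*q^5 + 16*q^3 + 4*q

/-!
Both `f₅` and `f₆` are palindromic of centre `22`, so `q⁻²² f₅(q)` is a polynomial in
`t = (q - q⁻¹)²` and `q⁻²² f₆(q)` is `q + q⁻¹` times such a polynomial. Since
`(q + q⁻¹)² = t + 4`, the product `(f₅ + √2 f₆)(f₅ - √2 f₆) = f₅² - 2 f₆²` is `q⁴⁴` times a
polynomial in `t`. This polynomial and the one coming from `f₅` are positive for `t ≥ 0`: each has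
a single negative coefficient, that of `t²`, which is absorbed by its neighbours. Hence
`√2 |f₆| < f₅`.
-/

/-- The polynomial in `t = (q - q⁻¹)²` whose value is `q⁻²² f₅(q)`. -/
def reducedF₅ (t : ℝ) : ℝ :=
  t ^ 11 + 37 * t ^ 10 + 523 * t ^ 9 + 3847 * t ^ 8 + 16335 * t ^ 7 + 41107 * t ^ 6
    + 59839 * t ^ 5 + 46499 * t ^ 4 + 14650 * t ^ 3 - 3174 * t ^ 2 + 304 * t + 600

/-- The polynomial in `t = (q - q⁻¹)²` whose product with `q + q⁻¹` is `q⁻²² f₆(q)`. -/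
def reducedF₆ (t : ℝ) : ℝ :=
  4 * t ^ 10 + 92 * t ^ 9 + 868 * t ^ 8 + 4324 * t ^ 7 + 12164 * t ^ 6 + 19148 * t ^ 5
    + 15716 * t ^ 4 + 5300 * t ^ 3 - 1136 * t ^ 2 + 48 * t + 72

theorem f₅_eq_pow_mul_reducedF₅ {q : ℝ} (hq : q ≠ 0) :
    f₅ q = q ^ 22 * reducedF₅ ((q - q⁻¹) ^ 2) := by
  unfold f₅ reducedF₅
  field_simp
  ring

theorem f₆_eq_pow_mul_reducedF₆ {q : ℝ} (hq : q ≠ 0) :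
    f₆ q = q ^ 22 * ((q + q⁻¹) * reducedF₆ ((q - q⁻¹) ^ 2)) := by
  unfold f₆ reducedF₆
  field_simp
  ring

theorem add_inv_sq_eq_sub_inv_sq_add_four {K : Type*} [Field K] {q : K} (hq : q ≠ 0) :
    (q + q⁻¹) ^ 2 = (q - q⁻¹) ^ 2 + 4 := by
  field_simp
  ring

theorem quadratic_pos_of_discrim_neg {R : Type*} [CommRing R] [LinearOrder R]
    [IsStrictOrderedRing R] {a b c : R} (ha : 0 < a) (h : discrim a b c < 0) (x : R) :
    0 < a * x ^ 2 + b * x + c := by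
  have completed_square :
      4 * a * (a * x ^ 2 + b * x + c) = (2 * a * x + b) ^ 2 - discrim a b c := by
    unfold discrim
    ring
  have scaled_pos : 0 < 4 * a * (a * x ^ 2 + b * x + c) := by
    rw [completed_square]
    linarith [sq_nonneg (2 * a * x + b)]
  exact pos_of_mul_pos_right scaled_pos (by positivity)

theorem reducedF₅_pos {t : ℝ} (ht : 0 ≤ t) : 0 < reducedF₅ t := by
  have quadratic_pos : 0 < 14650 * t ^ 2 + -3174 * t + 304 :=
    quadratic_pos_of_discrim_neg (by norm_num) (by norm_num [discrim]) t
  calc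
    0 < t ^ 11 + 37 * t ^ 10 + 523 * t ^ 9 + 3847 * t ^ 8 + 16335 * t ^ 7 + 41107 * t ^ 6
        + 59839 * t ^ 5 + 46499 * t ^ 4 + t * (14650 * t ^ 2 + -3174 * t + 304) + 600 := by
      positivity
    _ = reducedF₅ t := by
      unfold reducedF₅
      ring

theorem two_mul_add_four_mul_reducedF₆_sq_lt {t : ℝ} (ht : 0 ≤ t) :
    2 * (t + 4) * reducedF₆ t ^ 2 < reducedF₅ t ^ 2 := by
  have quadratic_pos : 0 < 10739616 * t ^ 2 + -2439968 * t + 299136 :=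
    quadratic_pos_of_discrim_neg (by norm_num) (by norm_num [discrim]) t
  rw [← sub_pos]
  calc
    0 < t ^ 22 + 42 * t ^ 21 + 815 * t ^ 20 + 9692 * t ^ 19 + 79005 * t ^ 18 + 467830 * t ^ 17
        + 2080951 * t ^ 16 + 7092624 * t ^ 15 + 18731495 * t ^ 14 + 38520134 * t ^ 13
        + 61674069 * t ^ 12 + 76540364 * t ^ 11 + 73138555 * t ^ 10 + 54318258 * t ^ 9
        + 36369505 * t ^ 8 + 36205688 * t ^ 7 + 52923888 * t ^ 6 + 61159608 * t ^ 5
        + 40972788 * t ^ 4 + t * (10739616 * t ^ 2 + -2439968 * t + 299136) + 318528 := by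
      positivity
    _ = reducedF₅ t ^ 2 - 2 * (t + 4) * reducedF₆ t ^ 2 := by
      unfold reducedF₅ reducedF₆
      ring

theorem f₅_pos (q : ℝ) : 0 < f₅ q := by
  obtain rfl | hq := eq_or_ne q 0
  · norm_num [f₅]
  · rw [f₅_eq_pow_mul_reducedF₅ hq]
    exact mul_pos (by positivity) (reducedF₅_pos (sq_nonneg _))

theorem two_mul_f₆_sq_lt_f₅_sq (q : ℝ) : 2 * f₆ q ^ 2 < f₅ q ^ 2 := by
  obtain rfl | hq := eq_or_ne q 0
  · norm_num [f₅, f₆]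
  · rw [f₅_eq_pow_mul_reducedF₅ hq, f₆_eq_pow_mul_reducedF₆ hq]
    set t := (q - q⁻¹) ^ 2
    calc
      2 * (q ^ 22 * ((q + q⁻¹) * reducedF₆ t)) ^ 2
          = (q ^ 22) ^ 2 * (2 * (q + q⁻¹) ^ 2 * reducedF₆ t ^ 2) := by ring
      _ = (q ^ 22) ^ 2 * (2 * (t + 4) * reducedF₆ t ^ 2) := by
        rw [add_inv_sq_eq_sub_inv_sq_add_four hq]
      _ < (q ^ 22) ^ 2 * reducedF₅ t ^ 2 := by
        gcongr
        exact two_mul_add_four_mul_reducedF₆_sq_lt (sq_nonneg _)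
      _ = (q ^ 22 * reducedF₅ t) ^ 2 := by ring

theorem f5_f6_pos_general (q : ℝ) :
    0 < f₅ q + √2 * f₆ q ∧ 0 < f₅ q - √2 * f₆ q := by
  have sq_lt : (√2 * f₆ q) ^ 2 < f₅ q ^ 2 := by
    rw [mul_pow, Real.sq_sqrt zero_le_two]
    exact two_mul_f₆_sq_lt_f₅_sq q
  obtain ⟨neg_lt, lt⟩ := abs_lt_of_sq_lt_sq' sq_lt (f₅_pos q).le
  exact ⟨neg_lt_iff_pos_add'.mp neg_lt, sub_pos.mpr lt⟩

theorem f5_f6_pos (q : ℝ) (hq : Real.sqrt 2 ≤ q) :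
    0 < f₅ q + Real.sqrt 2 * f₆ q ∧ 0 < f₅ q - Real.sqrt 2 * f₆ q :=
  f5_f6_pos_general q
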